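/- Let f : ℝ → ℝ be concave and non-decreasing on (0, ∞) and let q > 1 be real. For all positive integers p and n, one has (q^{f(n/(2p) + 1)})^p ≤ (q^{f(n/(2(p+1)) + 1)})^{p+1}. -/

import Mathlib

/-- for `f` concave, non-decreasing and positive on `(0,∞)` and `q > 1`,
`(q ^ f (n/(2p) + 1))^p ≤ (q ^ f (n/(2(p+1)) + 1))^(p+1)`. -/
theorem stmt_6 (f : ℝ → ℝ) (hconc : ConcaveOn ℝ (Set.Ioi (0 : ℝ)) f)
    (hmono : MonotoneOn f (Set.Ioi (0 : ℝ))) (hpos : ∀ x : ℝ, 0 < x → 0 < f x)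
    (q : ℝ) (hq : 1 < q) (p n : ℕ) (hp : 0 < p) (hn : 0 < n) :
    (q ^ f ((n : ℝ) / (2 * (p : ℝ)) + 1)) ^ p ≤
      (q ^ f ((n : ℝ) / (2 * ((p : ℝ) + 1)) + 1)) ^ (p + 1) := by
  have hp' : (0 : ℝ) < p := by exact_mod_cast hp
  have hq0 : (0 : ℝ) ≤ q := by linarith
  have hx : (0 : ℝ) < (n : ℝ) / (2 * (p : ℝ)) + 1 := by positivity
  have key := hconc.2 (Set.mem_Ioi.2 hx) (Set.mem_Ioi.2 (one_pos : (0 : ℝ) < 1))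
    (show (0 : ℝ) ≤ (p : ℝ) / (p + 1) by positivity)
    (show (0 : ℝ) ≤ 1 / ((p : ℝ) + 1) by positivity) (by field_simp)
  have hpt : ((p : ℝ) / (p + 1)) • ((n : ℝ) / (2 * (p : ℝ)) + 1) + (1 / ((p : ℝ) + 1)) • (1 : ℝ)
      = (n : ℝ) / (2 * ((p : ℝ) + 1)) + 1 := by
    simp only [smul_eq_mul]
    field_simp
    ring
  rw [hpt] at key
  simp only [smul_eq_mul] at key
  have h1 := hpos 1 one_pos
  rw [← Real.rpow_mul_natCast hq0, ← Real.rpow_mul_natCast hq0]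
  apply Real.rpow_le_rpow_of_exponent_le hq.le
  push_cast
  generalize f ((n : ℝ) / (2 * (p : ℝ)) + 1) = a at *
  generalize f ((n : ℝ) / (2 * ((p : ℝ) + 1)) + 1) = b at *
  have e : (p : ℝ) / (p + 1) * a + 1 / ((p : ℝ) + 1) * f 1 = (p * a + f 1) / (p + 1) := by
    ring
  rw [e, div_le_iff₀ (by positivity)] at key
  linarith
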